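/- In the symmetric group on 6 letters {0, 1, 2, 3, 4, 5} (Equiv.Perm (Fin 6)), the subgroup generated by the three permutations given in cycle notation by (0 3)(1 4)(2 5), (1 5 4 3 2), and (2 3 5 4) has order 120. -/

import Mathlib

/-!
Label the letter `0` by `∞` and the letter `k + 1` by `k ∈ 𝔽₅`. The three generators become the
Möbius transformations `x ↦ (2x - 1) / (x - 2)`, `x ↦ x - 1` and `x ↦ 2x` of the projective line
over `𝔽₅`. The last two generate the affine maps, that is, the stabilizer of `∞` in `PGL₂(𝔽₅)`.
This stabilizer is a maximal subgroup, because `PGL₂(𝔽₅)` acts doubly transitively, and the first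
generator moves `∞`. So the group is `PGL₂(𝔽₅)`, of order `5 (5² - 1) = 120`.
-/

open Equiv

namespace HumbertFixedGroup

open Matrix Matrix.GeneralLinearGroup MulAction OnePoint
open scoped LinearAlgebra.Projectivization

theorem eq_top_of_stabilizer_le {G X : Type*} [Group G] [MulAction G X] [IsPreprimitive G X]
    {H : Subgroup G} {x : X} (hH : stabilizer G x ≤ H) {g : G} (hg : g ∈ H) (hgx : g • x ≠ x) :
    H = ⊤ := by
  have : Nontrivial X := ⟨g • x, x, hgx⟩
  have hmaximal : IsCoatom (stabilizer G x) :=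
    IsPreprimitive.isCoatom_stabilizer_of_isPreprimitive G x
  exact hmaximal.2 H (lt_of_le_not_ge hH fun hle => hgx (hle hg))

theorem permCongr_eq_toPermHom {G X Y : Type*} [Group G] [MulAction G Y] {e : X ≃ Y} {σ : Perm X}
    {g : G} (h : ∀ x, e (σ x) = g • e x) : e.permCongr σ = toPermHom G Y g := by
  ext y
  simp [h]

/-- The homomorphism `a ↦ !![a, 0; 0, 1]`, whose values act on the projective line by `x ↦ a x`,
as those of `upperRightHom` act by translations. -/
def dilation {R : Type*} [CommRing R] : Rˣ →* GL (Fin 2) R where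
  toFun a := ⟨!![a, 0; 0, 1], !![↑a⁻¹, 0; 0, 1], by simp [one_fin_two], by simp [one_fin_two]⟩
  map_one' := by simp [Units.ext_iff, one_fin_two]
  map_mul' a b := by simp [Units.ext_iff]

section Field

variable {K : Type*} [Field K]

theorem exists_eq_scalar_mul_upperRightHom_mul_dilation {g : GL (Fin 2) K} (hg : g 1 0 = 0) :
    ∃ (d : Kˣ) (b : K) (a : Kˣ),
      g = GeneralLinearGroup.scalar (Fin 2) d * upperRightHom b * dilation a := by
  have hdet : g 0 0 ≠ 0 ∧ g 1 1 ≠ 0 := by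
    simpa [det_fin_two, hg] using g.det_ne_zero
  refine ⟨Units.mk0 _ hdet.2, g 0 1 / g 1 1, Units.mk0 _ (div_ne_zero hdet.1 hdet.2), ?_⟩
  ext i j
  fin_cases i <;> fin_cases j <;>
    simp [dilation, hg, mul_div_cancel₀, hdet, Matrix.mul_apply, diagonal_apply]

variable [DecidableEq K]

instance isPreprimitive_onePoint : IsPreprimitive (GL (Fin 2) K) (OnePoint K) :=
  let f : ℙ K (Fin 2 → K) →ₑ[SpecialLinearGroup.toGL (n := Fin 2) (R := K)] OnePoint K :=
    { toFun := (equivProjectivization K).symm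
      map_smul' g x := by
        rw [Equiv.symm_apply_eq, equivProjectivization_smul, Equiv.apply_symm_apply]
        rfl }
  IsPreprimitive.of_surjective (f := f) (equivProjectivization K).symm.surjective

theorem stabilizer_infty_le {H : Subgroup (GL (Fin 2) K)}
    (hscalar : ∀ d, GeneralLinearGroup.scalar (Fin 2) d ∈ H)
    (htranslation : ∀ b, upperRightHom b ∈ H) (hdilation : ∀ a, dilation a ∈ H) :
    stabilizer (GL (Fin 2) K) (∞ : OnePoint K) ≤ H := by
  intro s hs
  obtain ⟨d, b, a, rfl⟩ :=
    exists_eq_scalar_mul_upperRightHom_mul_dilation (smul_infty_eq_self_iff.mp hs)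
  exact H.mul_mem (H.mul_mem (hscalar d) (htranslation b)) (hdilation a)

theorem closure_sup_range_scalar_eq_top {g : GL (Fin 2) K} {b : K} {a : Kˣ}
    (hg : g • (∞ : OnePoint K) ≠ ∞) (hb : AddSubgroup.zmultiples b = ⊤)
    (ha : Subgroup.zpowers a = ⊤) :
    Subgroup.closure {g, upperRightHom b, dilation a} ⊔
      (GeneralLinearGroup.scalar (Fin 2)).range = ⊤ := by
  set S : Set (GL (Fin 2) K) := {g, upperRightHom b, dilation a}
  set H := Subgroup.closure S ⊔ (GeneralLinearGroup.scalar (Fin 2)).range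
  have hS {s} (hs : s ∈ S) : s ∈ H := Subgroup.mem_sup_left (Subgroup.subset_closure hs)
  refine eq_top_of_stabilizer_le (stabilizer_infty_le (fun d => ?_) (fun y => ?_) fun u => ?_)
    (hS (by simp [S])) hg
  · exact Subgroup.mem_sup_right ⟨d, rfl⟩
  · obtain ⟨n, rfl⟩ := AddSubgroup.mem_zmultiples_iff.mp (hb ▸ AddSubgroup.mem_top y)
    rw [AddChar.map_zsmul_eq_zpow]
    exact H.zpow_mem (hS (by simp [S])) n
  · obtain ⟨n, rfl⟩ := Subgroup.mem_zpowers_iff.mp (ha ▸ Subgroup.mem_top u)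
    rw [map_zpow]
    exact H.zpow_mem (hS (by simp [S])) n

theorem ker_toPermHom_onePoint :
    (toPermHom (GL (Fin 2) K) (OnePoint K)).ker = (GeneralLinearGroup.scalar (Fin 2)).range := by
  ext g
  constructor
  · intro hg
    have hfix (x : OnePoint K) : g • x = x := DFunLike.congr_fun (MonoidHom.mem_ker.mp hg) x
    have hfixpoly (c : K) := fixpointPolynomial_aeval_eq_zero_iff.mpr (hfix c)
    have h10 : g 1 0 = 0 := smul_infty_eq_self_iff.mp (hfix ∞)
    have h01 : g 0 1 = 0 := by simpa [fixpointPolynomial] using hfixpoly 0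
    have h11 : g 1 1 = g 0 0 := by
      simpa [fixpointPolynomial, h10, h01, sub_eq_zero] using hfixpoly 1
    refine ⟨Units.mk0 (g 0 0) fun h00 => g.det_ne_zero (by simp [det_fin_two, h00, h10]), ?_⟩
    ext i j
    fin_cases i <;> fin_cases j <;> simp [h10, h01, h11]
  · rintro ⟨d, rfl⟩
    refine Equiv.ext fun x => ?_
    cases x <;> simp [smul_infty_eq_ite, smul_some_eq_ite]

theorem closure_image_toPermHom_eq_range {g : GL (Fin 2) K} {b : K} {a : Kˣ}
    (hg : g • (∞ : OnePoint K) ≠ ∞) (hb : AddSubgroup.zmultiples b = ⊤)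
    (ha : Subgroup.zpowers a = ⊤) :
    Subgroup.closure (toPermHom _ (OnePoint K) '' {g, upperRightHom b, dilation a}) =
      (toPermHom (GL (Fin 2) K) (OnePoint K)).range := by
  rw [← MonoidHom.map_closure, MonoidHom.range_eq_map, Subgroup.map_eq_map_iff,
    ker_toPermHom_onePoint, closure_sup_range_scalar_eq_top hg hb ha, top_sup_eq]

theorem card_range_toPermHom_onePoint [Fintype K] :
    Nat.card (toPermHom (GL (Fin 2) K) (OnePoint K)).range =
      Fintype.card K * (Fintype.card K ^ 2 - 1) := by
  set q := Fintype.card K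
  set f := toPermHom (GL (Fin 2) K) (OnePoint K) with hf
  have hscalar : Function.Injective (GeneralLinearGroup.scalar (Fin 2) : Kˣ →* GL (Fin 2) K) :=
    Units.map_injective fun _ _ => scalar_inj.mp
  have hker : Nat.card f.ker = q - 1 := by
    rw [hf, ker_toPermHom_onePoint, ← Nat.card_congr (MonoidHom.ofInjective hscalar).toEquiv,
      Nat.card_eq_fintype_card, Fintype.card_units]
  have hGL : Nat.card (GL (Fin 2) K) = (q ^ 2 - 1) * (q ^ 2 - q) := by
    rw [card_GL_field, Fin.prod_univ_two, Fin.val_zero, Fin.val_one, pow_zero, pow_one]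
  have hlagrange : (q - 1) * Nat.card f.range = (q - 1) * (q * (q ^ 2 - 1)) := calc
    (q - 1) * Nat.card f.range = Nat.card (GL (Fin 2) K) := by
      rw [← hker, ← Subgroup.index_ker, Subgroup.card_mul_index]
    _ = (q ^ 2 - 1) * (q * (q - 1)) := by rw [hGL, sq q, ← Nat.mul_sub_one]
    _ = (q - 1) * (q * (q ^ 2 - 1)) := by ring
  exact Nat.eq_of_mul_eq_mul_left (Nat.sub_pos_of_lt Fintype.one_lt_card) hlagrange

end Field

instance decidableEqOnePoint {X : Type*} [DecidableEq X] : DecidableEq (OnePoint X) :=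
  inferInstanceAs (DecidableEq (Option X))

instance fact_prime_five : Fact (Nat.Prime 5) := ⟨Nat.prime_five⟩

/-- The labelling of the six letters by the projective line over `ZMod 5`: the letter `0` is `∞`,
and the letter `k + 1` is `k`. -/
def letterEquiv : Fin 6 ≃ OnePoint (ZMod 5) := finSuccEquiv 5

/-- The matrix of the Möbius transformation `x ↦ (2x - 1) / (x - 2)`. -/
def involution : GL (Fin 2) (ZMod 5) :=
  ⟨!![2, -1; 1, -2], !![-1, -2; 2, 1], by decide, by decide⟩

/-- The primitive root `2` modulo `5`. -/
def primitiveRoot : (ZMod 5)ˣ := ⟨2, 3, by decide, by decide⟩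

theorem zpowers_primitiveRoot : Subgroup.zpowers primitiveRoot = ⊤ := by
  have hpow : ∀ x : (ZMod 5)ˣ, ∃ n : Fin 4, primitiveRoot ^ (n : ℕ) = x := by decide
  exact (Subgroup.eq_top_iff' _).mpr fun x =>
    let ⟨n, hn⟩ := hpow x
    hn ▸ Subgroup.npow_mem_zpowers primitiveRoot n

theorem zmultiples_neg_one : AddSubgroup.zmultiples (-1 : ZMod 5) = ⊤ :=
  zmultiples_eq_top_of_prime_card (p := 5) (Nat.card_zmod 5) (by decide)

theorem involution_smul_infty_ne : involution • (∞ : OnePoint (ZMod 5)) ≠ ∞ :=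
  smul_infty_eq_self_iff.not.mpr (by decide)

theorem permCongr_three_transpositions :
    letterEquiv.permCongr (c[0, 3] * c[1, 4] * c[2, 5]) =
      toPermHom _ (OnePoint (ZMod 5)) involution :=
  permCongr_eq_toPermHom (by decide +kernel)

theorem permCongr_five_cycle :
    letterEquiv.permCongr c[1, 5, 4, 3, 2] =
      toPermHom _ (OnePoint (ZMod 5)) (upperRightHom (-1 : ZMod 5)) :=
  permCongr_eq_toPermHom (by decide +kernel)

theorem permCongr_four_cycle :
    letterEquiv.permCongr c[2, 3, 5, 4] =
      toPermHom _ (OnePoint (ZMod 5)) (dilation primitiveRoot) :=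
  permCongr_eq_toPermHom (by decide +kernel)

end HumbertFixedGroup

open HumbertFixedGroup Matrix.GeneralLinearGroup MulAction in
/-- the subgroup of S₆ generated by (0 3)(1 4)(2 5), (1 5 4 3 2) and
(2 3 5 4) (the fixed group of a Humbert component of discriminant Δ ≡ 5 mod 8)
has order 120. -/
theorem humbert_fixed_group_five_mod_eight_order :
    Nat.card (Subgroup.closure
      ({c[0, 3] * c[1, 4] * c[2, 5], c[1, 5, 4, 3, 2], c[2, 3, 5, 4]} :
        Set (Equiv.Perm (Fin 6)))) = 120 := by
  have hconj : (Subgroup.closure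
      {c[0, 3] * c[1, 4] * c[2, 5], c[1, 5, 4, 3, 2], c[2, 3, 5, 4]}).map
        letterEquiv.permCongrHom.toMonoidHom =
      (toPermHom (GL (Fin 2) (ZMod 5)) (OnePoint (ZMod 5))).range := by
    rw [← closure_image_toPermHom_eq_range involution_smul_infty_ne zmultiples_neg_one
      zpowers_primitiveRoot, MonoidHom.map_closure]
    simp only [Set.image_insert_eq, Set.image_singleton, MulEquiv.toMonoidHom_eq_coe,
      MonoidHom.coe_coe, permCongrHom_coe, permCongr_three_transpositions, permCongr_five_cycle,
      permCongr_four_cycle]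
  rw [← Subgroup.card_map_of_injective (f := letterEquiv.permCongrHom.toMonoidHom)
    letterEquiv.permCongrHom.injective, hconj, card_range_toPermHom_onePoint, ZMod.card]
  norm_num
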